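/- Let A be a real 2×2 matrix with trace T and determinant D, and let α ∈ (0,1). Both eigenvalues λ of A (as complex numbers) satisfy |arg λ| > απ/2 if and only if D > 0 and either T < 0, or T ≥ 0 and T/(2√D) < cos(απ/2). -/

import Mathlib

open Real

lemma arg_key (z : ℂ) (θ : ℝ) (h0 : 0 ≤ θ) (h1 : θ ≤ π) :
    θ < |Complex.arg z| ↔ z.re < ‖z‖ * Real.cos θ := by
  have hc : θ < |Complex.arg z| ↔ Real.cos |Complex.arg z| < Real.cos θ :=
    (Real.strictAntiOn_cos.lt_iff_gt ⟨abs_nonneg _, Complex.abs_arg_le_pi z⟩ ⟨h0, h1⟩).symm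
  by_cases hz : z = 0
  · subst hz
    simp [h0]
  · rw [hc, Real.cos_abs, Complex.cos_arg hz, div_lt_iff₀ (norm_pos_iff.mpr hz), mul_comm]

lemma real_crit (T D c : ℝ) (c0 : 0 < c) (c1 : c < 1) :
    (∀ z : ℂ, z ^ 2 - (T : ℂ) * z + (D : ℂ) = 0 → z.re < ‖z‖ * c) ↔
      (0 < D ∧ (T < 0 ∨ (0 ≤ T ∧ T / (2 * Real.sqrt D) < c))) := by
  have hnorm : ∀ z : ℂ, z.re ^ 2 + z.im ^ 2 = D → ‖z‖ = √D := by
    intro z hz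
    rw [Complex.norm_def, Complex.normSq_apply, ← hz]
    ring_nf
  constructor
  · intro h
    rcases le_or_gt (4 * D) (T ^ 2) with hd | hd
    · have hs := Real.sq_sqrt (sub_nonneg.mpr hd)
      have hs0 := Real.sqrt_nonneg (T ^ 2 - 4 * D)
      set s := √(T ^ 2 - 4 * D)
      have hx := h (((T + s) / 2 : ℝ) : ℂ) (by
        have : ((T + s) / 2) ^ 2 - T * ((T + s) / 2) + D = 0 := by nlinarith
        exact_mod_cast this)
      rw [Complex.ofReal_re, Complex.norm_real, Real.norm_eq_abs] at hx
      have hneg : (T + s) / 2 < 0 := by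
        by_contra hn
        push Not at hn
        rw [abs_of_nonneg hn] at hx
        nlinarith
      exact ⟨by nlinarith, Or.inl (by linarith)⟩
    · have hD : 0 < D := by nlinarith [sq_nonneg T]
      refine ⟨hD, ?_⟩
      rcases lt_or_ge T 0 with hT | hT
      · exact Or.inl hT
      refine Or.inr ⟨hT, ?_⟩
      have hs := Real.sq_sqrt (sub_nonneg.mpr hd.le)
      set s := √(4 * D - T ^ 2)
      have hx := h ⟨T / 2, s / 2⟩ (by
        apply Complex.ext <;> simp [pow_two] <;> nlinarith)
      rw [hnorm _ (by simp only; nlinarith)] at hx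
      simp only at hx
      rw [div_lt_iff₀ (by positivity)]
      linarith
  · rintro ⟨hD, hT⟩ z hz
    have hsp := Real.sqrt_pos.mpr hD
    have hs := Real.sq_sqrt hD.le
    have hT' : T < 2 * √D * c := by
      rcases hT with hT | ⟨_, hT⟩
      · have : 0 < 2 * √D * c := by positivity
        linarith
      · rw [div_lt_iff₀ (by positivity)] at hT
        linarith
    have hre := congrArg Complex.re hz
    have him := congrArg Complex.im hz
    simp [pow_two] at hre him
    by_cases hy : z.im = 0
    · rw [hy] at hre
      have hTn : T < 0 := by
        by_contra hn
        push Not at hn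
        have h1 : T < 2 * √D := by nlinarith
        nlinarith [sq_nonneg (2 * z.re - T)]
      have hx : z.re < 0 := by
        by_contra hn
        push Not at hn
        nlinarith
      have := mul_nonneg (norm_nonneg z) c0.le
      linarith
    · have hx : z.re = T / 2 := by
        apply mul_right_cancel₀ hy
        linarith
      rw [hnorm z (by rw [hx] at hre ⊢; nlinarith), hx]
      linarith



theorem eigenvalues_arg_criterion (A : Matrix (Fin 2) (Fin 2) ℝ) (α : ℝ)
    (hα : α ∈ Set.Ioo (0:ℝ) 1) :
    (∀ lam : ℂ, lam ^ 2 - (A.trace : ℂ) * lam + (A.det : ℂ) = 0 →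
        α * π / 2 < |Complex.arg lam|) ↔
      (0 < A.det ∧ (A.trace < 0 ∨
        (0 ≤ A.trace ∧ A.trace / (2 * Real.sqrt A.det) < Real.cos (α * π / 2)))) := by
  obtain ⟨h0, h1⟩ := hα
  have hp := Real.pi_pos
  have ht0 : 0 < α * π / 2 := by positivity
  have ht1 : α * π / 2 < π / 2 := by nlinarith
  have c0 : 0 < Real.cos (α * π / 2) := Real.cos_pos_of_mem_Ioo ⟨by linarith, ht1⟩
  have c1 : Real.cos (α * π / 2) < 1 := by
    rw [← Real.cos_zero]
    exact Real.cos_lt_cos_of_nonneg_of_le_pi le_rfl (by linarith) ht0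
  rw [← real_crit _ _ _ c0 c1]
  simp only [arg_key _ _ ht0.le (by linarith : α * π / 2 ≤ π)]
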